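/- Let b : [0,∞) → ℝ be continuously differentiable with b(t) ≥ 0, b(t) ≤ C₁(1+t)^{−1} and |b'(t)| ≤ C₂(1+t)^{−2} for all t ≥ 0, and assume that either limsup_{t→∞} t·b(t) < 1/2 or liminf_{t→∞} t·b(t) > 1/2. Set λ(t) = exp(∫₀^t b(τ)dτ). Fix Λ > 0 and let u : [0,∞) → ℂ be a twice continuously differentiable solution of u''(t) + 2b(t)u'(t) + Λ²u(t) = 0 with (u(0), u'(0)) ≠ (0,0). Then there exist v₁, v₂ ∈ ℂ, not both zero, such that with v(t) := v₁·cos(Λt) + (v₂/Λ)·sin(Λt) one has |λ(t)·Λ·u(t) − Λ·v(t)| + |λ(t)·u'(t) − v'(t)| → 0 as t → ∞. -/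

import Mathlib

open MeasureTheory Filter

/-- The auxiliary function `λ(t) = exp(∫₀^t b)`. -/
noncomputable def lam (b : ℝ → ℝ) (t : ℝ) : ℝ := Real.exp (∫ τ in (0:ℝ)..t, b τ)

open Set Topology

/-!
With `λ' = bλ`, the substitution `w = λu` removes the damping term:
`w'' + Λ²w = q w` with `q = b² + b'`, which is integrable on `[0, ∞)`. Undoing the free evolution,
i.e. rotating the energy vector `(Λw, w')` by the angle `Λt`, leaves a vector `z` with
`‖z'‖ ≤ k ‖z‖` for an integrable `k`. Grönwall's inequality, forwards in time, shows that `z'` is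
integrable, so `z` converges; backwards in time, it shows that the limit is nonzero unless
`z(0) = 0`. Finally `λu' = w' - bw`, and `bw → 0` because `w` is bounded and `b → 0`.
-/

section Gronwall

variable {E : Type*} [NormedAddCommGroup E] [NormedSpace ℝ E]
  {f f' : ℝ → E} {K K' : ℝ → ℝ} {a b : ℝ}

theorem norm_right_le_mul_exp_of_norm_deriv_le (hab : a ≤ b)
    (hf : ∀ t ∈ Icc a b, HasDerivWithinAt f (f' t) (Icc a b) t)
    (hK : ∀ t ∈ Icc a b, HasDerivWithinAt K (K' t) (Icc a b) t)
    (hle : ∀ t ∈ Icc a b, ‖f' t‖ ≤ K' t * ‖f t‖) :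
    ‖f b‖ ≤ ‖f a‖ * Real.exp (K b - K a) := by
  have strict_barrier : ∀ ε > 0,
      ‖f b‖ ≤ (‖f a‖ + ε) * Real.exp (K b - K a + ε * (b - a)) := by
    intro ε hε
    -- Raising the initial value and the rate by `ε` makes the differential inequality strict.
    let B : ℝ → ℝ := fun t => (‖f a‖ + ε) * Real.exp (K t - K a + ε * (t - a))
    have hB : ∀ t ∈ Icc a b, HasDerivWithinAt B ((K' t + ε) * B t) (Icc a b) t := by
      intro t ht
      have hexponent := ((hK t ht).sub_const (K a)).add
        (((hasDerivWithinAt_id t (Icc a b)).sub_const a).const_mul ε)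
      refine (hexponent.exp.const_mul (‖f a‖ + ε)).congr_deriv ?_
      simp only [B, Pi.add_apply, id_eq]
      ring
    have hIcc_mem : ∀ t ∈ Ico a b, Icc a b ∈ 𝓝[≥] t := fun t ht =>
      mem_of_superset (Icc_mem_nhdsGE ht.2) (Icc_subset_Icc_left ht.1)
    refine image_norm_le_of_norm_deriv_right_lt_deriv_boundary' (B := B)
      (fun t ht => (hf t ht).continuousWithinAt)
      (fun t ht => (hf t (Ico_subset_Icc_self ht)).mono_of_mem_nhdsWithin (hIcc_mem t ht))
      (by simp [B, hε.le])
      (fun t ht => (hB t ht).continuousWithinAt)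
      (fun t ht => (hB t (Ico_subset_Icc_self ht)).mono_of_mem_nhdsWithin (hIcc_mem t ht))
      (fun t ht heq => ?_) (right_mem_Icc.2 hab)
    have hBpos : 0 < B t := by positivity
    calc ‖f' t‖ ≤ K' t * B t := heq ▸ hle t (Ico_subset_Icc_self ht)
      _ < (K' t + ε) * B t := mul_lt_mul_of_pos_right (lt_add_of_pos_right _ hε) hBpos
  have barrier_limit : Tendsto
      (fun ε : ℝ => (‖f a‖ + ε) * Real.exp (K b - K a + ε * (b - a))) (𝓝[>] 0)
      (𝓝 (‖f a‖ * Real.exp (K b - K a))) := by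
    refine Tendsto.mono_left (Continuous.tendsto' (by fun_prop) _ _ ?_) nhdsWithin_le_nhds
    simp
  exact ge_of_tendsto barrier_limit (eventually_mem_nhdsWithin.mono strict_barrier)

theorem norm_left_le_mul_exp_of_norm_deriv_le (hab : a ≤ b)
    (hf : ∀ t ∈ Icc a b, HasDerivWithinAt f (f' t) (Icc a b) t)
    (hK : ∀ t ∈ Icc a b, HasDerivWithinAt K (K' t) (Icc a b) t)
    (hle : ∀ t ∈ Icc a b, ‖f' t‖ ≤ K' t * ‖f t‖) :
    ‖f a‖ ≤ ‖f b‖ * Real.exp (K b - K a) := by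
  have hmaps : MapsTo Neg.neg (Icc (-b) (-a)) (Icc a b) := fun t ht =>
    ⟨le_neg_of_le_neg ht.2, neg_le_of_neg_le ht.1⟩
  have hneg : ∀ t, HasDerivWithinAt Neg.neg (-1 : ℝ) (Icc (-b) (-a)) t :=
    fun t => hasDerivWithinAt_neg t _
  have key := norm_right_le_mul_exp_of_norm_deriv_le (neg_le_neg hab)
    (f := fun t => f (-t)) (K := fun t => -K (-t))
    (fun t ht => (hf (-t) (hmaps ht)).scomp t (hneg t) hmaps)
    (fun t ht => ((hK (-t) (hmaps ht)).scomp t (hneg t) hmaps).neg)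
    (fun t ht => by simpa using hle (-t) (hmaps ht))
  simpa [neg_add_eq_sub] using key

theorem integrableOn_Ioi_of_norm_deriv_le [CompleteSpace E] {κ : ℝ}
    (hf : ∀ t ∈ Ici a, HasDerivWithinAt f (f' t) (Ici a) t)
    (hK : ∀ t ∈ Ici a, HasDerivWithinAt K (K' t) (Ici a) t)
    (hK'_nonneg : ∀ t ∈ Ici a, 0 ≤ K' t) (hK_lim : Tendsto K atTop (𝓝 κ))
    (hle : ∀ t ∈ Ici a, ‖f' t‖ ≤ K' t * ‖f t‖) :
    IntegrableOn f' (Ioi a) := by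
  have hK_le : ∀ t ∈ Ici a, K t ≤ κ := by
    have hK_mono : MonotoneOn K (Ici a) := monotoneOn_of_hasDerivWithinAt_nonneg (convex_Ici a)
      (fun t ht => (hK t ht).continuousWithinAt)
      (fun t ht => (hK t (interior_subset ht)).mono interior_subset)
      (fun t ht => hK'_nonneg t (interior_subset ht))
    exact fun t ht => ge_of_tendsto hK_lim ((eventually_ge_atTop t).mono fun s hs =>
      hK_mono ht (mem_Ici.2 (le_trans ht hs)) hs)
  have hK'_int : IntegrableOn K' (Ioi a) := integrableOn_Ioi_deriv_of_nonneg
    (hK a self_mem_Ici).continuousWithinAt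
    (fun t ht => (hK t (Ioi_subset_Ici_self ht)).hasDerivAt (Ici_mem_nhds ht))
    (fun t ht => hK'_nonneg t (Ioi_subset_Ici_self ht)) hK_lim
  refine Integrable.mono' (hK'_int.mul_const (‖f a‖ * Real.exp (κ - K a))) ?_ ?_
  · refine (aestronglyMeasurable_deriv f _).congr ((ae_restrict_iff' measurableSet_Ioi).2 ?_)
    exact ae_of_all _ fun t ht =>
      ((hf t (Ioi_subset_Ici_self ht)).hasDerivAt (Ici_mem_nhds ht)).deriv
  · refine (ae_restrict_iff' measurableSet_Ioi).2 (ae_of_all _ fun t ht => ?_)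
    have ht' : t ∈ Ici a := Ioi_subset_Ici_self ht
    have hK't : 0 ≤ K' t := hK'_nonneg t ht'
    calc ‖f' t‖ ≤ K' t * ‖f t‖ := hle t ht'
      _ ≤ K' t * (‖f a‖ * Real.exp (K t - K a)) := by
        gcongr
        exact norm_right_le_mul_exp_of_norm_deriv_le ht'
          (fun s hs => (hf s hs.1).mono Icc_subset_Ici_self)
          (fun s hs => (hK s hs.1).mono Icc_subset_Ici_self) (fun s hs => hle s hs.1)
      _ ≤ K' t * (‖f a‖ * Real.exp (κ - K a)) := by
        gcongr
        exact hK_le t ht'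

theorem exists_ne_zero_tendsto_of_norm_deriv_le [CompleteSpace E] {κ : ℝ}
    (hf : ∀ t ∈ Ici a, HasDerivWithinAt f (f' t) (Ici a) t)
    (hK : ∀ t ∈ Ici a, HasDerivWithinAt K (K' t) (Ici a) t) (hK_lim : Tendsto K atTop (𝓝 κ))
    (hle : ∀ t ∈ Ici a, ‖f' t‖ ≤ K' t * ‖f t‖) (ha : f a ≠ 0) :
    ∃ l ≠ 0, Tendsto f atTop (𝓝 l) := by
  have hlower : ∀ t ∈ Ici a, ‖f a‖ ≤ ‖f t‖ * Real.exp (K t - K a) := fun t ht =>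
    norm_left_le_mul_exp_of_norm_deriv_le ht
      (fun s hs => (hf s hs.1).mono Icc_subset_Ici_self)
      (fun s hs => (hK s hs.1).mono Icc_subset_Ici_self) (fun s hs => hle s hs.1)
  have hf_pos : ∀ t ∈ Ici a, 0 < ‖f t‖ := fun t ht =>
    pos_of_mul_pos_left ((norm_pos_iff.2 ha).trans_le (hlower t ht)) (Real.exp_pos _).le
  have hK'_nonneg : ∀ t ∈ Ici a, 0 ≤ K' t := fun t ht =>
    nonneg_of_mul_nonneg_left ((norm_nonneg _).trans (hle t ht)) (hf_pos t ht)
  have hf_lim : Tendsto f atTop (𝓝 (limUnder atTop f)) :=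
    tendsto_limUnder_of_hasDerivAt_of_integrableOn_Ioi
      (fun t ht => (hf t (Ioi_subset_Ici_self ht)).hasDerivAt (Ici_mem_nhds ht))
      (integrableOn_Ioi_of_norm_deriv_le hf hK hK'_nonneg hK_lim hle)
  refine ⟨limUnder atTop f, fun hzero => ha ?_, hf_lim⟩
  have hbound_lim : Tendsto (fun t => ‖f t‖ * Real.exp (K t - K a)) atTop (𝓝 0) := by
    simpa [hzero] using hf_lim.norm.mul (hK_lim.sub_const (K a)).rexp
  exact norm_le_zero_iff.1 (ge_of_tendsto hbound_lim ((eventually_ge_atTop a).mono hlower))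

end Gronwall

theorem hasDerivWithinAt_integral_Ici {E : Type*} [NormedAddCommGroup E] [NormedSpace ℝ E]
    [CompleteSpace E] {g : ℝ → E} {a t : ℝ} (hg : ContinuousOn g (Ici a)) (ht : t ∈ Ici a) :
    HasDerivWithinAt (fun x => ∫ τ in a..x, g τ) (g t) (Ici a) t := by
  have hext : Continuous fun x => g (max a x) :=
    hg.comp_continuous (by fun_prop) fun x => le_max_left a x
  have hcongr : ∀ x ∈ Ici a, ∫ τ in a..x, g τ = ∫ τ in a..x, g (max a τ) := fun x hx =>
    intervalIntegral.integral_congr fun τ hτ => by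
      rw [max_eq_right (uIcc_of_le (mem_Ici.1 hx) ▸ hτ).1]
  refine ((hext.integral_hasStrictDerivAt a t).hasDerivAt.hasDerivWithinAt.congr hcongr
    (hcongr t ht)).congr_deriv ?_
  rw [max_eq_right ht]

section PhaseRotation

variable {F : Type*} [NormedAddCommGroup F] [NormedSpace ℝ F]

variable (F) in
/-- The quarter turn of the phase plane `F × F`. The equation `v'' + Λ²v = 0` says that the
energy vector `p = (Λv, v')` satisfies `p' = -Λ • quarterTurn F p`. -/
def quarterTurn : F × F →L[ℝ] F × F :=
  (-ContinuousLinearMap.snd ℝ F F).prod (ContinuousLinearMap.fst ℝ F F)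

variable (F) in
/-- The rotation of the phase plane `F × F` by the angle `θ`. The free energy vector at time `t` is
`phaseRotation F (-(Λ * t)) (Λ • v₁, v₂)`. The product carries the sup norm, for which this is not
an isometry. -/
noncomputable def phaseRotation (θ : ℝ) : F × F →L[ℝ] F × F :=
  Real.cos θ • ContinuousLinearMap.id ℝ (F × F) + Real.sin θ • quarterTurn F

@[simp]
theorem quarterTurn_apply (x : F × F) : quarterTurn F x = (-x.2, x.1) :=
  rfl

theorem phaseRotation_apply (θ : ℝ) (x : F × F) :
    phaseRotation F θ x =
      (Real.cos θ • x.1 - Real.sin θ • x.2, Real.cos θ • x.2 + Real.sin θ • x.1) := by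
  simp [phaseRotation, Prod.ext_iff, sub_eq_add_neg]

theorem phaseRotation_neg_apply_phaseRotation (θ : ℝ) (x : F × F) :
    phaseRotation F (-θ) (phaseRotation F θ x) = x := by
  calc phaseRotation F (-θ) (phaseRotation F θ x)
      = (Real.sin θ ^ 2 + Real.cos θ ^ 2) • x := by
        simp only [phaseRotation_apply, Real.cos_neg, Real.sin_neg]
        ext <;> dsimp only [Prod.smul_fst, Prod.smul_snd] <;> module
    _ = x := by rw [Real.sin_sq_add_cos_sq, one_smul]

theorem norm_phaseRotation_apply_le (θ : ℝ) (x : F × F) :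
    ‖phaseRotation F θ x‖ ≤ 2 * ‖x‖ := by
  have hturn : ‖quarterTurn F x‖ = ‖x‖ := by simp [Prod.norm_def, max_comm]
  calc ‖phaseRotation F θ x‖ ≤ ‖Real.cos θ • x‖ + ‖Real.sin θ • quarterTurn F x‖ :=
        norm_add_le _ _
    _ = |Real.cos θ| * ‖x‖ + |Real.sin θ| * ‖x‖ := by simp only [norm_smul, hturn, Real.norm_eq_abs]
    _ ≤ 1 * ‖x‖ + 1 * ‖x‖ := by
      gcongr
      exacts [Real.abs_cos_le_one θ, Real.abs_sin_le_one θ]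
    _ = 2 * ‖x‖ := by ring

theorem hasDerivWithinAt_phaseRotation_apply {p : ℝ → F × F} {p' : F × F} {Λ t : ℝ} {s : Set ℝ}
    (hp : HasDerivWithinAt p p' s t) :
    HasDerivWithinAt (fun t => phaseRotation F (Λ * t) (p t))
      (phaseRotation F (Λ * t) (p' + Λ • quarterTurn F (p t))) s t := by
  have hangle : HasDerivWithinAt (fun t => Λ * t) Λ s t := by
    simpa using (hasDerivWithinAt_id t s).const_mul Λ
  refine ((hangle.cos.smul hp).add
    (hangle.sin.smul ((quarterTurn F).hasFDerivAt.comp_hasDerivWithinAt t hp))).congr_deriv ?_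
  simp only [phaseRotation_apply, Function.comp_apply, quarterTurn_apply]
  ext <;> dsimp only [Prod.fst_add, Prod.snd_add, Prod.smul_fst, Prod.smul_snd] <;> module

theorem phaseRotation_neg_apply_smul_mk {Λ : ℝ} (hΛ : Λ ≠ 0) (θ : ℝ) (v₁ v₂ : F) :
    phaseRotation F (-θ) (Λ • v₁, v₂) =
      (Λ • (Real.cos θ • v₁ + (Real.sin θ / Λ) • v₂),
        -((Λ * Real.sin θ) • v₁) + Real.cos θ • v₂) := by
  simp only [phaseRotation_apply, Real.cos_neg, Real.sin_neg, Prod.mk.injEq]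
  constructor <;> match_scalars <;> field_simp

end PhaseRotation

section PerturbedOscillator

variable {F : Type*} [NormedAddCommGroup F] [NormedSpace ℝ F] {q : ℝ → ℝ} {Λ : ℝ} {w w' : ℝ → F}

theorem hasDerivWithinAt_phaseRotation_oscillator {t : ℝ} {s : Set ℝ}
    (hw : HasDerivWithinAt w (w' t) s t)
    (hw' : HasDerivWithinAt w' ((q t - Λ ^ 2) • w t) s t) :
    HasDerivWithinAt (fun t => phaseRotation F (Λ * t) (Λ • w t, w' t))
      (phaseRotation F (Λ * t) (0, q t • w t)) s t := by
  refine (hasDerivWithinAt_phaseRotation_apply ((hw.const_smul Λ).prodMk hw')).congr_deriv ?_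
  congr 1
  ext
  · simp
  · dsimp only [quarterTurn_apply, Prod.snd_add, Prod.smul_snd, Pi.smul_apply]
    module

theorem norm_phaseRotation_perturbation_le (hΛ : Λ ≠ 0) (c θ : ℝ) (x y : F) :
    ‖phaseRotation F θ (0, c • x)‖ ≤ 4 / |Λ| * |c| * ‖phaseRotation F θ (Λ • x, y)‖ := by
  have hx : |Λ| * ‖x‖ ≤ 2 * ‖phaseRotation F θ (Λ • x, y)‖ :=
    calc |Λ| * ‖x‖ = ‖Λ • x‖ := (norm_smul Λ x).symm
      _ ≤ ‖(Λ • x, y)‖ := norm_fst_le (Λ • x, y)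
      _ = ‖phaseRotation F (-θ) (phaseRotation F θ (Λ • x, y))‖ := by
        rw [phaseRotation_neg_apply_phaseRotation]
      _ ≤ 2 * ‖phaseRotation F θ (Λ • x, y)‖ := norm_phaseRotation_apply_le _ _
  calc ‖phaseRotation F θ (0, c • x)‖ ≤ 2 * ‖((0 : F), c • x)‖ := norm_phaseRotation_apply_le _ _
    _ = 2 / |Λ| * |c| * (|Λ| * ‖x‖) := by
      rw [Prod.norm_mk, norm_zero, max_eq_right (norm_nonneg _), norm_smul, Real.norm_eq_abs]
      field_simp
    _ ≤ 2 / |Λ| * |c| * (2 * ‖phaseRotation F θ (Λ • x, y)‖) := by gcongr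
    _ = 4 / |Λ| * |c| * ‖phaseRotation F θ (Λ • x, y)‖ := by ring

theorem exists_ne_zero_tendsto_oscillator_sub_phaseRotation [CompleteSpace F] (hΛ : Λ ≠ 0)
    (hq : ContinuousOn q (Ici 0)) (hq_int : IntegrableOn q (Ioi 0))
    (hw : ∀ t ∈ Ici (0 : ℝ), HasDerivWithinAt w (w' t) (Ici 0) t)
    (hw' : ∀ t ∈ Ici (0 : ℝ), HasDerivWithinAt w' ((q t - Λ ^ 2) • w t) (Ici 0) t)
    (h0 : (w 0, w' 0) ≠ 0) :
    ∃ x ≠ 0, Tendsto (fun t => (Λ • w t, w' t) - phaseRotation F (-(Λ * t)) x) atTop (𝓝 0) := by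
  have hz0 : phaseRotation F (Λ * 0) (Λ • w 0, w' 0) ≠ 0 := by
    simpa [phaseRotation_apply, hΛ] using h0
  obtain ⟨x, hx, hlim⟩ := exists_ne_zero_tendsto_of_norm_deriv_le
    (fun t ht => hasDerivWithinAt_phaseRotation_oscillator (hw t ht) (hw' t ht))
    (fun t ht => hasDerivWithinAt_integral_Ici (hq.abs.const_mul (4 / |Λ|)) ht)
    (intervalIntegral_tendsto_integral_Ioi 0 (hq_int.abs.const_mul (4 / |Λ|)) tendsto_id)
    (fun t _ => norm_phaseRotation_perturbation_le hΛ (q t) (Λ * t) (w t) (w' t)) hz0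
  refine ⟨x, hx, squeeze_zero_norm (fun t => ?_)
    (by simpa using (tendsto_iff_norm_sub_tendsto_zero.1 hlim).const_mul 2)⟩
  calc ‖(Λ • w t, w' t) - phaseRotation F (-(Λ * t)) x‖
      = ‖phaseRotation F (-(Λ * t)) (phaseRotation F (Λ * t) (Λ • w t, w' t) - x)‖ := by
        rw [map_sub, phaseRotation_neg_apply_phaseRotation]
    _ ≤ 2 * ‖phaseRotation F (Λ * t) (Λ • w t, w' t) - x‖ := norm_phaseRotation_apply_le _ _

theorem isBoundedUnder_norm_of_tendsto_sub_phaseRotation {ι : Type*} {l : Filter ι}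
    {p : ι → F × F} {θ : ι → ℝ} {x : F × F}
    (h : Tendsto (fun t => p t - phaseRotation F (θ t) x) l (𝓝 0)) :
    IsBoundedUnder (· ≤ ·) l (norm ∘ p) := by
  refine isBoundedUnder_of_eventually_le (a := 1 + 2 * ‖x‖) ?_
  filter_upwards [h.norm.eventually_le_const (by simp : ‖(0 : F × F)‖ < 1)] with t ht
  calc ‖p t‖ = ‖(p t - phaseRotation F (θ t) x) + phaseRotation F (θ t) x‖ := by
        rw [sub_add_cancel]
    _ ≤ 1 + 2 * ‖x‖ := norm_add_le_of_le ht (norm_phaseRotation_apply_le _ _)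

end PerturbedOscillator

section Dissipation

variable {F : Type*} [NormedAddCommGroup F] [NormedSpace ℝ F]
  {b b' : ℝ → ℝ} {Λ : ℝ} {u u' u'' : ℝ → F}

@[simp]
theorem lam_zero (b : ℝ → ℝ) : lam b 0 = 1 := by
  simp [lam]

theorem hasDerivWithinAt_lam {t : ℝ} (hb : ContinuousOn b (Ici 0)) (ht : t ∈ Ici 0) :
    HasDerivWithinAt (lam b) (lam b t * b t) (Ici 0) t :=
  (hasDerivWithinAt_integral_Ici hb ht).exp

theorem hasDerivWithinAt_lam_smul {t : ℝ} (hb : ContinuousOn b (Ici 0)) (ht : t ∈ Ici 0)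
    (hu : HasDerivWithinAt u (u' t) (Ici 0) t) :
    HasDerivWithinAt (fun t => lam b t • u t) (lam b t • (u' t + b t • u t)) (Ici 0) t := by
  refine ((hasDerivWithinAt_lam hb ht).smul hu).congr_deriv ?_
  module

theorem hasDerivWithinAt_lam_smul_add {t : ℝ} (hb : ContinuousOn b (Ici 0)) (ht : t ∈ Ici 0)
    (hb' : HasDerivWithinAt b (b' t) (Ici 0) t)
    (hu : HasDerivWithinAt u (u' t) (Ici 0) t) (hu' : HasDerivWithinAt u' (u'' t) (Ici 0) t)
    (heq : u'' t + (2 * b t) • u' t + Λ ^ 2 • u t = 0) :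
    HasDerivWithinAt (fun t => lam b t • (u' t + b t • u t))
      ((b t ^ 2 + b' t - Λ ^ 2) • lam b t • u t) (Ici 0) t := by
  refine ((hasDerivWithinAt_lam hb ht).smul (hu'.add (hb'.smul hu))).congr_deriv ?_
  simp only [Pi.add_apply, Pi.smul_apply']
  have hu''_eq : u'' t = -((2 * b t) • u' t + Λ ^ 2 • u t) :=
    eq_neg_of_add_eq_zero_left (by rw [← add_assoc, heq])
  rw [hu''_eq]
  module

theorem exists_ne_zero_tendsto_lam_smul_sub_phaseRotation [CompleteSpace F] (hΛ : Λ ≠ 0)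
    (hb' : ∀ t ∈ Ici (0 : ℝ), HasDerivWithinAt b (b' t) (Ici 0) t)
    (hb'_cont : ContinuousOn b' (Ici 0)) (hb_lim : Tendsto b atTop (𝓝 0))
    (hq_int : IntegrableOn (fun t => b t ^ 2 + b' t) (Ioi 0))
    (hu : ∀ t ∈ Ici (0 : ℝ), HasDerivWithinAt u (u' t) (Ici 0) t)
    (hu' : ∀ t ∈ Ici (0 : ℝ), HasDerivWithinAt u' (u'' t) (Ici 0) t)
    (heq : ∀ t ∈ Ici (0 : ℝ), u'' t + (2 * b t) • u' t + Λ ^ 2 • u t = 0)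
    (hdata : ¬(u 0 = 0 ∧ u' 0 = 0)) :
    ∃ x ≠ 0, Tendsto (fun t => (Λ • lam b t • u t, lam b t • u' t) -
      phaseRotation F (-(Λ * t)) x) atTop (𝓝 0) := by
  have hb : ContinuousOn b (Ici 0) := fun t ht => (hb' t ht).continuousWithinAt
  have hw0 : (lam b 0 • u 0, lam b 0 • (u' 0 + b 0 • u 0)) ≠ 0 := by
    intro hzero
    obtain ⟨hu0, hsum0⟩ : u 0 = 0 ∧ u' 0 + b 0 • u 0 = 0 := by simpa using hzero
    exact hdata ⟨hu0, by simpa [hu0] using hsum0⟩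
  obtain ⟨x, hx, hlim⟩ := exists_ne_zero_tendsto_oscillator_sub_phaseRotation hΛ
    ((hb.pow 2).add hb'_cont) hq_int
    (fun t ht => hasDerivWithinAt_lam_smul hb ht (hu t ht))
    (fun t ht => hasDerivWithinAt_lam_smul_add hb ht (hb' t ht) (hu t ht) (hu' t ht) (heq t ht))
    hw0
  refine ⟨x, hx, ?_⟩
  have hcorrection : Tendsto (fun t => b t • lam b t • u t) atTop (𝓝 0) := by
    have hbp := hb_lim.zero_smul_isBoundedUnder_le
      (isBoundedUnder_norm_of_tendsto_sub_phaseRotation hlim)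
    simpa [smul_comm _ Λ, hΛ] using hbp.fst_nhds.const_smul Λ⁻¹
  have hvector := hlim.sub ((tendsto_const_nhds (x := (0 : F))).prodMk_nhds hcorrection)
  rw [Prod.mk_zero_zero, sub_zero] at hvector
  refine hvector.congr fun t => ?_
  ext
  · simp only [Prod.fst_sub, sub_zero]
  · simp only [Prod.snd_sub]
    module

end Dissipation

section Decay

variable {b : ℝ → ℝ} {C C₁ C₂ : ℝ}

theorem tendsto_zero_of_abs_le_div_one_add (hb : ∀ t ≥ 0, |b t| ≤ C / (1 + t)) :
    Tendsto b atTop (𝓝 0) :=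
  squeeze_zero_norm' ((eventually_ge_atTop 0).mono hb)
    ((tendsto_atTop_add_const_left _ 1 tendsto_id).const_div_atTop C)

theorem integrableOn_Ioi_of_abs_le_div_one_add_sq {g : ℝ → ℝ} (hg : ContinuousOn g (Ici 0))
    (hg_le : ∀ t ≥ 0, |g t| ≤ C / (1 + t) ^ 2) : IntegrableOn g (Ioi 0) := by
  refine Integrable.mono' (integrable_inv_one_add_sq.const_mul |C|).integrableOn
    ((hg.mono Ioi_subset_Ici_self).aestronglyMeasurable measurableSet_Ioi)
    ((ae_restrict_iff' measurableSet_Ioi).2 (ae_of_all _ fun t ht => ?_))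
  have ht' : 0 ≤ t := (mem_Ioi.1 ht).le
  calc |g t| ≤ C / (1 + t) ^ 2 := hg_le t ht'
    _ ≤ |C| / (1 + t ^ 2) := by
      gcongr
      · exact le_abs_self C
      · nlinarith
    _ = |C| * (1 + t ^ 2)⁻¹ := div_eq_mul_inv _ _

theorem abs_sq_add_le_div_sq {x y s : ℝ} (hx : |x| ≤ C₁ / s) (hy : |y| ≤ C₂ / s ^ 2) :
    |x ^ 2 + y| ≤ (C₁ ^ 2 + C₂) / s ^ 2 :=
  calc |x ^ 2 + y| ≤ |x| ^ 2 + |y| := abs_pow x 2 ▸ abs_add_le (x ^ 2) y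
    _ ≤ (C₁ / s) ^ 2 + C₂ / s ^ 2 := by gcongr
    _ = (C₁ ^ 2 + C₂) / s ^ 2 := by rw [div_pow, add_div]

end Decay

theorem modified_scattering_fixed_frequency_general
    {F : Type*} [NormedAddCommGroup F] [NormedSpace ℝ F] [CompleteSpace F]
    {b b' : ℝ → ℝ}
    (hb' : ∀ t ∈ Ici (0 : ℝ), HasDerivWithinAt b (b' t) (Ici 0) t)
    (hb'_cont : ContinuousOn b' (Ici 0)) (hb_lim : Tendsto b atTop (𝓝 0))
    (hq_int : IntegrableOn (fun t => b t ^ 2 + b' t) (Ioi 0))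
    {Λ : ℝ} (hΛ : Λ ≠ 0) {u u' u'' : ℝ → F}
    (hu : ∀ t ∈ Ici (0 : ℝ), HasDerivWithinAt u (u' t) (Ici 0) t)
    (hu' : ∀ t ∈ Ici (0 : ℝ), HasDerivWithinAt u' (u'' t) (Ici 0) t)
    (heq : ∀ t ∈ Ici (0 : ℝ), u'' t + (2 * b t) • u' t + Λ ^ 2 • u t = 0)
    (hdata : ¬(u 0 = 0 ∧ u' 0 = 0)) :
    ∃ v₁ v₂ : F, ¬(v₁ = 0 ∧ v₂ = 0) ∧
      Tendsto (fun t =>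
        ‖lam b t • Λ • u t - Λ • (Real.cos (Λ * t) • v₁ + (Real.sin (Λ * t) / Λ) • v₂)‖ +
        ‖lam b t • u' t - (-((Λ * Real.sin (Λ * t)) • v₁) + Real.cos (Λ * t) • v₂)‖)
        atTop (𝓝 0) := by
  obtain ⟨x, hx, hlim⟩ := exists_ne_zero_tendsto_lam_smul_sub_phaseRotation hΛ hb' hb'_cont
    hb_lim hq_int hu hu' heq hdata
  obtain ⟨v₁, v₂, rfl⟩ : ∃ v₁ v₂, x = (Λ • v₁, v₂) :=
    ⟨Λ⁻¹ • x.1, x.2, by rw [smul_inv_smul₀ hΛ]⟩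
  refine ⟨v₁, v₂, by simpa [hΛ] using hx, ?_⟩
  have hsum := hlim.fst_nhds.norm.add hlim.snd_nhds.norm
  simpa only [phaseRotation_neg_apply_smul_mk hΛ, Prod.mk_sub_mk, smul_comm Λ, Prod.fst_zero,
    Prod.snd_zero, norm_zero, add_zero] using hsum

/-- Modified scattering at a fixed frequency `Λ > 0`
(Theorems 2 and 3.1 of the paper in spectral-parameter form): if
`limsup t·b(t) < 1/2` or `liminf t·b(t) > 1/2`, then for every nontrivial
solution of `u'' + 2b(t)u' + Λ²u = 0` there is a nontrivial free solution
`v(t) = v₁cos(Λt) + (v₂/Λ)sin(Λt)` with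
`|λ(t)Λu(t) − Λv(t)| + |λ(t)u'(t) − v'(t)| → 0`. -/
theorem modified_scattering_fixed_frequency
    (b b' : ℝ → ℝ) (C₁ C₂ : ℝ)
    (hb' : ∀ t ≥ (0:ℝ), HasDerivAt b (b' t) t)
    (hb'c : ContinuousOn b' (Set.Ici 0))
    (hb0 : ∀ t ≥ (0:ℝ), 0 ≤ b t)
    (hb1 : ∀ t ≥ (0:ℝ), b t ≤ C₁ / (1 + t))
    (hb2 : ∀ t ≥ (0:ℝ), |b' t| ≤ C₂ / (1 + t) ^ 2)
    (hdich : (∃ μ < (1/2 : ℝ), ∀ᶠ t in atTop, t * b t ≤ μ) ∨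
             (∃ μ > (1/2 : ℝ), ∀ᶠ t in atTop, μ ≤ t * b t))
    (Λ : ℝ) (hΛ : 0 < Λ)
    (u u' u'' : ℝ → ℂ)
    (hu : ∀ t ≥ (0:ℝ), HasDerivAt u (u' t) t)
    (hu' : ∀ t ≥ (0:ℝ), HasDerivAt u' (u'' t) t)
    (hu'' : ContinuousOn u'' (Set.Ici 0))
    (heq : ∀ t ≥ (0:ℝ), u'' t + 2 * (b t : ℂ) * u' t + (Λ : ℂ) ^ 2 * u t = 0)
    (hdata : ¬(u 0 = 0 ∧ u' 0 = 0)) :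
    ∃ v₁ v₂ : ℂ, ¬(v₁ = 0 ∧ v₂ = 0) ∧
      Tendsto (fun t =>
        ‖(lam b t : ℂ) * Λ * u t -
            (Λ : ℂ) * (v₁ * (Real.cos (Λ * t) : ℂ) + v₂ / Λ * (Real.sin (Λ * t) : ℂ))‖ +
        ‖(lam b t : ℂ) * u' t -
            (-(v₁ * Λ * (Real.sin (Λ * t) : ℂ)) + v₂ * (Real.cos (Λ * t) : ℂ))‖)
        atTop (nhds 0) := by
  have hb : ContinuousOn b (Ici 0) := fun t ht => (hb' t ht).continuousAt.continuousWithinAt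
  have hb_abs : ∀ t ≥ 0, |b t| ≤ C₁ / (1 + t) := fun t ht =>
    (abs_of_nonneg (hb0 t ht)).trans_le (hb1 t ht)
  simpa [div_eq_mul_inv, mul_comm, mul_left_comm, mul_assoc, mul_add] using
    modified_scattering_fixed_frequency_general (fun t ht => (hb' t ht).hasDerivWithinAt) hb'c
      (tendsto_zero_of_abs_le_div_one_add hb_abs)
      (integrableOn_Ioi_of_abs_le_div_one_add_sq ((hb.pow 2).add hb'c) fun t ht =>
        abs_sq_add_le_div_sq (hb_abs t ht) (hb2 t ht))
      hΛ.ne' (fun t ht => (hu t ht).hasDerivWithinAt) (fun t ht => (hu' t ht).hasDerivWithinAt)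
      (fun t ht => by simpa using heq t ht) hdata
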